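/- arXiv:1209.4347 — 2 statements merged into one kernel-verified Lean document; each statement's English description precedes it below -/
import Mathlib

section
/- Let ω be an antisymmetric 2-tensor on ℝ^7 (a real antisymmetric 7×7 matrix), viewed as an element of so(7). Then ω annihilates the standard G₂ 3-form φ under the natural Lie algebra action on 3-tensors, i.e. ω_{a}{}^{d} φ_{dbc} + ω_{b}{}^{d} φ_{adc} + ω_{c}{}^{d} φ_{abd} = 0 for all a, b, c, if and only if ω_{ab} φ^{ab}{}_{c} = 0 for all c. In other words, the subalgebra g₂ = {ω ∈ so(7) : ω·φ = 0} coincides with the subspace Λ²₁₄ = {ω ∈ Λ²(ℝ^7) : ω ⌟ φ = 0}. -/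
open scoped BigOperators

/-- Components of the standard G₂ 3-form `φ` on the seven ordered (0-indexed) index
triples corresponding to `φ₁₂₃ = φ₁₄₅ = φ₁₆₇ = φ₂₄₆ = 1`, `φ₂₅₇ = φ₃₄₇ = φ₃₅₆ = -1`. -/
def phi0 : ℕ → ℕ → ℕ → ℝ
  | 0, 1, 2 => 1
  | 0, 3, 4 => 1
  | 0, 5, 6 => 1
  | 1, 3, 5 => 1
  | 1, 4, 6 => -1
  | 2, 3, 6 => -1
  | 2, 4, 5 => -1
  | _, _, _ => 0

/-- The standard G₂ 3-form `φ` on `ℝ⁷`, as a totally antisymmetric 3-tensor. -/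
def phi (a b c : Fin 7) : ℝ :=
  phi0 a.val b.val c.val - phi0 a.val c.val b.val + phi0 b.val c.val a.val
    - phi0 b.val a.val c.val + phi0 c.val a.val b.val - phi0 c.val b.val a.val

/-- The Levi-Civita symbol on seven indices, with `ε 1234567 = 1`. -/
noncomputable def eps (v : Fin 7 → Fin 7) : ℝ :=
  if h : Function.Bijective v then ((Equiv.Perm.sign (Equiv.ofBijective v h) : ℤ) : ℝ) else 0

/-- The 4-form `ψ = ⋆φ`, `ψ_{abcd} = (1/6) ε_{abcdmnp} φ^{mnp}`. -/
noncomputable def psi (a b c d : Fin 7) : ℝ :=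
  (1 / 6 : ℝ) * ∑ m : Fin 7, ∑ n : Fin 7, ∑ p : Fin 7,
    eps ![a, b, c, d, m, n, p] * phi m n p

/-- The Euclidean metric `g_{ab} = δ_{ab}` on `ℝ⁷`. -/
def gE (a b : Fin 7) : ℝ := if a = b then 1 else 0

theorem phi_swap12 (a b c : Fin 7) : phi b a c = -phi a b c := by
  unfold phi; ring

theorem phi_swap23 (a b c : Fin 7) : phi a c b = -phi a b c := by
  unfold phi; ring

theorem alt_zero (T : Fin 7 → Fin 7 → Fin 7 → ℝ)
    (h1 : ∀ a b c, T b a c = -T a b c) (h2 : ∀ a b c, T a c b = -T a b c)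
    (h : ∀ a b c, a < b → b < c → T a b c = 0) (a b c : Fin 7) : T a b c = 0 := by
  have d1 : ∀ a c, T a a c = 0 := fun a c => by linarith [h1 a a c]
  have d2 : ∀ a c, T a c c = 0 := fun a c => by linarith [h2 a c c]
  have key : ∀ a b c, a < b → T a b c = 0 := by
    intro a b c hab
    rcases lt_trichotomy b c with hbc | rfl | hbc
    · exact h a b c hab hbc
    · exact d2 _ _
    · rcases lt_trichotomy a c with hac | rfl | hac
      · linarith [h2 a c b, h a c b hac hbc]
      · linarith [h2 a b a, h1 a b a, d1 a b]
      · linarith [h2 a c b, h1 c a b, h c a b hac hab]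
  rcases lt_trichotomy a b with hab | rfl | hab
  · exact key a b c hab
  · exact d1 _ _
  · linarith [h1 b a c, key b a c hab]

set_option maxHeartbeats 4000000 in
/-- An antisymmetric 2-tensor `ω ∈ so(7)` annihilates `φ` under the natural Lie algebra
action on 3-tensors if and only if `ω_{ab} φ^{ab}{}_c = 0` for all `c`; i.e.
`g₂ = Λ²₁₄` inside `so(7)`. -/
theorem g2_eq_lam2_14 (ω : Matrix (Fin 7) (Fin 7) ℝ) (hskew : ∀ a b, ω b a = -ω a b) :
    (∀ a b c : Fin 7,
        ∑ d : Fin 7, (ω a d * phi d b c + ω b d * phi a d c + ω c d * phi a b d) = 0)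
      ↔ (∀ c : Fin 7, ∑ a : Fin 7, ∑ b : Fin 7, ω a b * phi a b c = 0) := by
  have hd : ∀ a, ω a a = 0 := fun a => by linarith [hskew a a]
  have h10 := hskew 0 1
  have h20 := hskew 0 2
  have h30 := hskew 0 3
  have h40 := hskew 0 4
  have h50 := hskew 0 5
  have h60 := hskew 0 6
  have h21 := hskew 1 2
  have h31 := hskew 1 3
  have h41 := hskew 1 4
  have h51 := hskew 1 5
  have h61 := hskew 1 6
  have h32 := hskew 2 3
  have h42 := hskew 2 4
  have h52 := hskew 2 5
  have h62 := hskew 2 6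
  have h43 := hskew 3 4
  have h53 := hskew 3 5
  have h63 := hskew 3 6
  have h54 := hskew 4 5
  have h64 := hskew 4 6
  have h65 := hskew 5 6
  constructor
  · intro h
    have e0 := h 1 3 6
    have e1 := h 0 3 6
    have e2 := h 0 3 5
    have e3 := h 0 1 6
    have e4 := h 0 1 5
    have e5 := h 0 1 4
    have e6 := h 0 1 3
    simp [Fin.sum_univ_succ, phi, phi0] at e0 e1 e2 e3 e4 e5 e6
    intro c
    fin_cases c <;> simp [Fin.sum_univ_succ, phi, phi0] <;> linarith
  · intro h
    have e0 := h 0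
    have e1 := h 1
    have e2 := h 2
    have e3 := h 3
    have e4 := h 4
    have e5 := h 5
    have e6 := h 6
    simp [Fin.sum_univ_succ, phi, phi0] at e0 e1 e2 e3 e4 e5 e6
    have main : ∀ a b c : Fin 7, a < b → b < c →
        ∑ d : Fin 7, (ω a d * phi d b c + ω b d * phi a d c + ω c d * phi a b d) = 0 := by
      intro a b c hab hbc
      fin_cases a <;> fin_cases b <;> first
        | exact absurd hab (by decide)
        | (fin_cases c <;> first
            | exact absurd hbc (by decide)
            | (simp [Fin.sum_univ_succ, phi, phi0, hd] <;> linarith))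
    refine alt_zero (fun a b c =>
      ∑ d : Fin 7, (ω a d * phi d b c + ω b d * phi a d c + ω c d * phi a b d)) ?_ ?_ main
    · intro a b c
      simp only [← Finset.sum_neg_distrib]
      refine Finset.sum_congr rfl fun d _ => ?_
      rw [phi_swap12 a d c, phi_swap12 d b c, phi_swap12 a b d]
      ring
    · intro a b c
      simp only [← Finset.sum_neg_distrib]
      refine Finset.sum_congr rfl fun d _ => ?_
      rw [phi_swap23 d b c, phi_swap23 a b d, phi_swap23 a d c]
      ring
end

section
/- Every alternating 3-tensor χ on ℝ^7 decomposes uniquely as χ = f φ + α ⌟ ψ + i_φ(h), i.e. χ_{abc} = f φ_{abc} + α^{d} ψ_{dabc} + (1/3)( h_{a}{}^{d} φ_{dbc} + h_{b}{}^{d} φ_{adc} + h_{c}{}^{d} φ_{abd} ), where f ∈ ℝ, α ∈ ℝ^7, and h is a traceless symmetric 2-tensor on ℝ^7. Consequently Λ³(ℝ^7) = Λ³₁ ⊕ Λ³₇ ⊕ Λ³₂₇, a direct sum of subspaces of dimensions 1, 7, and 27 respectively. -/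
open scoped BigOperators

/-- `i_φ(h)_{abc} = (1/3)(h_a{}^d φ_{dbc} + h_b{}^d φ_{adc} + h_c{}^d φ_{abd})`. -/
noncomputable def iphi (h : Matrix (Fin 7) (Fin 7) ℝ) (a b c : Fin 7) : ℝ :=
  (1 / 3 : ℝ) * ∑ d : Fin 7, (h a d * phi d b c + h b d * phi a d c + h c d * phi a b d)

/-- The space `Λ³(ℝ⁷)` of alternating 3-tensors on `ℝ⁷`. -/
def Lam3 : Submodule ℝ (Fin 7 → Fin 7 → Fin 7 → ℝ) where
  carrier := {χ | (∀ a b c, χ b a c = -χ a b c) ∧ (∀ a b c, χ a c b = -χ a b c)}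
  add_mem' := by
    rintro x y ⟨hx1, hx2⟩ ⟨hy1, hy2⟩
    exact ⟨fun a b c => by simp only [Pi.add_apply, hx1 a b c, hy1 a b c]; ring,
      fun a b c => by simp only [Pi.add_apply, hx2 a b c, hy2 a b c]; ring⟩
  zero_mem' := ⟨fun a b c => by simp, fun a b c => by simp⟩
  smul_mem' := by
    rintro r x ⟨hx1, hx2⟩
    exact ⟨fun a b c => by simp only [Pi.smul_apply, hx1 a b c, smul_eq_mul]; ring,
      fun a b c => by simp only [Pi.smul_apply, hx2 a b c, smul_eq_mul]; ring⟩

/-- The 1-dimensional component `Λ³₁ = ℝ·φ`. -/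
def Lam3_1 : Submodule ℝ (Fin 7 → Fin 7 → Fin 7 → ℝ) where
  carrier := {χ | ∃ f : ℝ, ∀ a b c, χ a b c = f * phi a b c}
  add_mem' := by
    rintro x y ⟨f, hf⟩ ⟨g, hg⟩
    exact ⟨f + g, fun a b c => by simp only [Pi.add_apply, hf a b c, hg a b c]; ring⟩
  zero_mem' := ⟨0, fun a b c => by simp⟩
  smul_mem' := by
    rintro r x ⟨f, hf⟩
    exact ⟨r * f, fun a b c => by simp only [Pi.smul_apply, hf a b c, smul_eq_mul]; ring⟩

/-- The 7-dimensional component `Λ³₇ = {α ⌟ ψ : α ∈ ℝ⁷}`. -/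
noncomputable def Lam3_7 : Submodule ℝ (Fin 7 → Fin 7 → Fin 7 → ℝ) where
  carrier := {χ | ∃ α : Fin 7 → ℝ, ∀ a b c, χ a b c = ∑ d : Fin 7, α d * psi d a b c}
  add_mem' := by
    rintro x y ⟨α, hα⟩ ⟨β, hβ⟩
    refine ⟨α + β, fun a b c => ?_⟩
    simp only [Pi.add_apply, hα a b c, hβ a b c, add_mul, Finset.sum_add_distrib]
  zero_mem' := ⟨0, fun a b c => by simp⟩
  smul_mem' := by
    rintro r x ⟨α, hα⟩
    refine ⟨r • α, fun a b c => ?_⟩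
    simp only [Pi.smul_apply, hα a b c, smul_eq_mul, Finset.mul_sum]
    exact Finset.sum_congr rfl fun d _ => by ring

/-- The 27-dimensional component
`Λ³₂₇ = {i_φ(h) : h symmetric traceless}`. -/
noncomputable def Lam3_27 : Submodule ℝ (Fin 7 → Fin 7 → Fin 7 → ℝ) where
  carrier := {χ | ∃ h : Matrix (Fin 7) (Fin 7) ℝ, (∀ a b, h a b = h b a) ∧
    (∑ a : Fin 7, h a a = 0) ∧ ∀ a b c, χ a b c = iphi h a b c}
  add_mem' := by
    rintro x y ⟨h, hsym, htr, hx⟩ ⟨k, ksym, ktr, hy⟩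
    refine ⟨h + k, fun a b => ?_, ?_, fun a b c => ?_⟩
    · simp only [Matrix.add_apply, hsym a b, ksym a b]
    · simp only [Matrix.add_apply, Finset.sum_add_distrib, htr, ktr, add_zero]
    · simp only [Pi.add_apply, hx a b c, hy a b c, iphi, Matrix.add_apply]
      rw [← mul_add, ← Finset.sum_add_distrib]
      congr 1
      exact Finset.sum_congr rfl fun d _ => by ring
  zero_mem' := by
    refine ⟨0, fun a b => by simp, by simp, fun a b c => ?_⟩
    simp [iphi]
  smul_mem' := by
    rintro r x ⟨h, hsym, htr, hx⟩
    refine ⟨r • h, fun a b => ?_, ?_, fun a b c => ?_⟩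
    · simp only [Matrix.smul_apply, hsym a b]
    · simp only [Matrix.smul_apply, smul_eq_mul, ← Finset.mul_sum, htr, mul_zero]
    · simp only [Pi.smul_apply, hx a b c, smul_eq_mul, iphi, Matrix.smul_apply,
        Finset.mul_sum]
      exact Finset.sum_congr rfl fun d _ => by ring

namespace G2aux

def sg (x y : Fin 7) : ℤ := if x < y then 1 else if y < x then -1 else 0

def phi0Z : ℕ → ℕ → ℕ → ℤ
  | 0, 1, 2 => 1
  | 0, 3, 4 => 1
  | 0, 5, 6 => 1
  | 1, 3, 5 => 1
  | 1, 4, 6 => -1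
  | 2, 3, 6 => -1
  | 2, 4, 5 => -1
  | _, _, _ => 0

def phiZ (a b c : Fin 7) : ℤ :=
  phi0Z a.val b.val c.val - phi0Z a.val c.val b.val + phi0Z b.val c.val a.val
    - phi0Z b.val a.val c.val + phi0Z c.val a.val b.val - phi0Z c.val b.val a.val

lemma phi0_eq (a b c : ℕ) : phi0 a b c = (phi0Z a b c : ℝ) := by
  unfold phi0 phi0Z
  split <;> simp

lemma phi_eq (a b c : Fin 7) : phi a b c = (phiZ a b c : ℝ) := by
  simp [phi, phiZ, phi0_eq]

lemma eps_eq (v : Fin 7 → Fin 7) :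
    eps v = ((∏ j, ∏ i ∈ Finset.Iio j, sg (v i) (v j) : ℤ) : ℝ) := by
  unfold eps
  split_ifs with h
  · rw [Equiv.Perm.sign_eq_prod_prod_Iio]
    congr 1
    push_cast
    refine Finset.prod_congr rfl fun j _ => Finset.prod_congr rfl fun i hi => ?_
    have hne : v i ≠ v j := fun e => (Finset.mem_Iio.1 hi).ne (h.1 e)
    simp only [Equiv.ofBijective_apply, sg]
    rcases lt_or_gt_of_ne hne with h1 | h1
    · simp [h1]
    · simp [h1, h1.not_gt]
  · have : ¬ Function.Injective v := fun hi => h (Finite.injective_iff_bijective.1 hi)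
    simp only [Function.Injective, not_forall] at this
    obtain ⟨a, b, hab, hne⟩ := this
    symm
    rw [Int.cast_eq_zero]
    rcases lt_or_gt_of_ne hne with h1 | h1
    · exact Finset.prod_eq_zero (Finset.mem_univ b)
        (Finset.prod_eq_zero (Finset.mem_Iio.2 h1) (by simp [sg, hab]))
    · exact Finset.prod_eq_zero (Finset.mem_univ a)
        (Finset.prod_eq_zero (Finset.mem_Iio.2 h1) (by simp [sg, hab]))

def P4 (a b c d : Fin 7) : ℤ := sg a b * (sg a c * (sg b c * (sg a d * (sg b d * sg c d))))
def Q4 (a b c d m : Fin 7) : ℤ := sg a m * (sg b m * (sg c m * sg d m))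

lemma eps_vec (a b c d m n p : Fin 7) : eps ![a, b, c, d, m, n, p] =
    ((P4 a b c d * (Q4 a b c d m * (sg m n * Q4 a b c d n)
      * (sg m p * sg n p * Q4 a b c d p)) : ℤ) : ℝ) := by
  rw [eps_eq]
  congr 1
  have h0 : Finset.Iio (0 : Fin 7) = ∅ := by decide
  have h1 : Finset.Iio (1 : Fin 7) = {0} := by decide
  have h2 : Finset.Iio (2 : Fin 7) = {0,1} := by decide
  have h3 : Finset.Iio (3 : Fin 7) = {0,1,2} := by decide
  have h4 : Finset.Iio (4 : Fin 7) = {0,1,2,3} := by decide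
  have h5 : Finset.Iio (5 : Fin 7) = {0,1,2,3,4} := by decide
  have h6 : Finset.Iio (6 : Fin 7) = {0,1,2,3,4,5} := by decide
  rw [Fin.prod_univ_seven, h0, h1, h2, h3, h4, h5, h6]
  simp [P4, Q4]
  ring

def S7 (f : Fin 7 → ℤ) : ℤ := f 0 + f 1 + f 2 + f 3 + f 4 + f 5 + f 6

/-- The index `d` with `phi d b c ≠ 0`. -/
def K : Fin 7 → Fin 7 → Fin 7 := ![![0, 2, 1, 4, 3, 6, 5],
  ![2, 0, 0, 5, 6, 3, 4],
  ![1, 0, 0, 6, 5, 4, 3],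
  ![4, 5, 6, 0, 0, 1, 2],
  ![3, 6, 5, 0, 0, 2, 1],
  ![6, 3, 4, 1, 2, 0, 0],
  ![5, 4, 3, 2, 1, 0, 0]]

/-- The sign of `phi (K b c) b c`. -/
def sK : Fin 7 → Fin 7 → ℤ := ![![0, 1, -1, 1, -1, 1, -1],
  ![-1, 0, 1, 1, -1, -1, 1],
  ![1, -1, 0, -1, -1, 1, 1],
  ![-1, -1, 1, 0, 1, 1, -1],
  ![1, 1, 1, -1, 0, -1, -1],
  ![-1, 1, -1, -1, 1, 0, 1],
  ![1, -1, -1, 1, 1, -1, 0]]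

lemma phiZ_eq : ∀ d b c : Fin 7, phiZ d b c = if d = K b c then sK b c else 0 := by
  decide +kernel

lemma phi_sum (x : Fin 7 → ℝ) (b c : Fin 7) :
    ∑ d, x d * phi d b c = sK b c * x (K b c) := by
  simp [phi_eq, phiZ_eq, mul_comm]

def inner6 (a b c d : Fin 7) : ℤ :=
  S7 fun m => if Q4 a b c d m = 0 then 0 else S7 fun n => if sg m n * Q4 a b c d n = 0 then 0 else
    S7 fun p => if sg m p * sg n p * Q4 a b c d p = 0 then 0 else
   (Q4 a b c d m * (sg m n * Q4 a b c d n)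
      * (sg m p * sg n p * Q4 a b c d p)) * phiZ m n p

lemma inner6_eq (a b c d : Fin 7) : inner6 a b c d =
    ∑ m, ∑ n, ∑ p, (Q4 a b c d m * (sg m n * Q4 a b c d n)
      * (sg m p * sg n p * Q4 a b c d p)) * phiZ m n p := by
  have : ∀ f : Fin 7 → ℤ, S7 f = ∑ i, f i := fun f => (Fin.sum_univ_seven f).symm
  simp only [inner6, this]
  refine Finset.sum_congr rfl fun m _ => ?_
  split_ifs with h
  · simp [h]
  refine Finset.sum_congr rfl fun n _ => ?_
  split_ifs with h
  · simp only [h, mul_zero, zero_mul, Finset.sum_const_zero]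
  refine Finset.sum_congr rfl fun p _ => ?_
  split_ifs with h
  · simp only [h, mul_zero, zero_mul]
  rfl

set_option maxRecDepth 100000 in
lemma key : ∀ b c d : Fin 7, b < c → c < d → ∀ a : Fin 7,
    (if P4 a b c d = 0 then 0 else P4 a b c d * inner6 a b c d)
      = 6 * (if a = K (K b c) d then - (sK b c * sK (K b c) d) else 0) := by
  decide +kernel

lemma psi_eq (a b c d : Fin 7) : psi a b c d = 1 / 6 * ((P4 a b c d * inner6 a b c d : ℤ) : ℝ) := by
  rw [psi]
  congr 1
  simp only [inner6_eq, eps_vec, phi_eq, ← Int.cast_mul, ← Int.cast_sum, Finset.mul_sum]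
  congr 1
  refine Finset.sum_congr rfl fun m _ => Finset.sum_congr rfl fun n _ =>
    Finset.sum_congr rfl fun p _ => ?_
  ring

lemma psi_sum (x : Fin 7 → ℝ) (b c d : Fin 7) (h1 : b < c) (h2 : c < d) :
    ∑ a, x a * psi a b c d = - (sK b c * sK (K b c) d * x (K (K b c) d)) := by
  have : ∀ a, psi a b c d =
      ((if a = K (K b c) d then - (sK b c * sK (K b c) d) else 0 : ℤ) : ℝ) := by
    intro a
    have k := key b c d h1 h2 a
    have : P4 a b c d * inner6 a b c d =
        6 * (if a = K (K b c) d then - (sK b c * sK (K b c) d) else 0) := by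
      rw [← k]; split_ifs with h <;> simp [h]
    rw [psi_eq, this]; push_cast; ring
  simp only [this]
  push_cast
  simp only [mul_ite, mul_zero, Finset.sum_ite_eq', Finset.sum_ite_eq, Finset.mem_univ, if_true]
  ring

lemma sg_swap (a b : Fin 7) : sg a b = - sg b a := by revert a b; decide

lemma psi_swap1 (d a b c : Fin 7) : psi d b a c = - psi d a b c := by
  have h1 : P4 d b a c = - P4 d a b c := by
    simp only [P4]; rw [sg_swap b a]; ring
  have h2 : inner6 d b a c = inner6 d a b c := by
    have : ∀ m, Q4 d b a c m = Q4 d a b c m := fun m => by simp only [Q4]; ring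
    simp only [inner6_eq, this]
  rw [psi_eq, psi_eq, h1, h2]; push_cast; ring

lemma psi_swap2 (d a b c : Fin 7) : psi d a c b = - psi d a b c := by
  have h1 : P4 d a c b = - P4 d a b c := by
    simp only [P4]; rw [sg_swap c b]; ring
  have h2 : inner6 d a c b = inner6 d a b c := by
    have : ∀ m, Q4 d a c b m = Q4 d a b c m := fun m => by simp only [Q4]; ring
    simp only [inner6_eq, this]
  rw [psi_eq, psi_eq, h1, h2]; push_cast; ring

lemma phi_swap1 (a b c : Fin 7) : phi b a c = - phi a b c := by simp only [phi]; ring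
lemma phi_swap2 (a b c : Fin 7) : phi a c b = - phi a b c := by simp only [phi]; ring

lemma iphi_swap1 (h) (a b c : Fin 7) : iphi h b a c = - iphi h a b c := by
  simp only [iphi]
  rw [← mul_neg, ← Finset.sum_neg_distrib]
  congr 1
  refine Finset.sum_congr rfl fun d _ => ?_
  rw [phi_swap1 a d c, phi_swap1 d b c, phi_swap1 a b d]; ring

lemma iphi_swap2 (h) (a b c : Fin 7) : iphi h a c b = - iphi h a b c := by
  simp only [iphi]
  rw [← mul_neg, ← Finset.sum_neg_distrib]
  congr 1
  refine Finset.sum_congr rfl fun d _ => ?_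
  rw [phi_swap2 d b c, phi_swap2 a b d, phi_swap2 a d c]; ring

lemma iphi_eq (h : Matrix (Fin 7) (Fin 7) ℝ) (a b c : Fin 7) : iphi h a b c =
    (sK b c * h a (K b c) - sK a c * h b (K a c) + sK a b * h c (K a b)) / 3 := by
  rw [← phi_sum (h a), ← phi_sum (h b), ← phi_sum (h c), iphi, ← Finset.sum_sub_distrib,
    ← Finset.sum_add_distrib, one_div, div_eq_inv_mul]
  congr 1
  refine Finset.sum_congr rfl fun d _ => ?_
  rw [phi_swap1 d a c, phi_swap2 a d b, phi_swap1 d a b]; ring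

lemma phi_val (a b c : Fin 7) : phi a b c = ((if a = K b c then sK b c else 0 : ℤ) : ℝ) := by
  rw [phi_eq, phiZ_eq]

noncomputable def F (f : ℝ) (α : Fin 7 → ℝ) (h : Matrix (Fin 7) (Fin 7) ℝ) (a b c : Fin 7) : ℝ :=
  f * phi a b c + (∑ d : Fin 7, α d * psi d a b c) + iphi h a b c

lemma F_swap1 (f α h) (a b c : Fin 7) : F f α h b a c = - F f α h a b c := by
  simp only [F, iphi_swap1 h a b c, phi_swap1 a b c, psi_swap1 _ a b c, mul_neg,
    Finset.sum_neg_distrib]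
  ring

lemma F_swap2 (f α h) (a b c : Fin 7) : F f α h a c b = - F f α h a b c := by
  simp only [F, iphi_swap2 h a b c, phi_swap2 a b c, psi_swap2 _ a b c, mul_neg,
    Finset.sum_neg_distrib]
  ring

lemma alt_ext (χ η : Fin 7 → Fin 7 → Fin 7 → ℝ)
    (h1 : ∀ a b c, χ b a c = -χ a b c) (h2 : ∀ a b c, χ a c b = -χ a b c)
    (k1 : ∀ a b c, η b a c = -η a b c) (k2 : ∀ a b c, η a c b = -η a b c)
    (H : ∀ a b c, a < b → b < c → χ a b c = η a b c) (a b c : Fin 7) : χ a b c = η a b c := by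
  rcases lt_trichotomy a b with hab | hab | hab
  · rcases lt_trichotomy b c with hbc | hbc | hbc
    · exact H a b c hab hbc
    · subst hbc; linarith [h2 a b b, k2 a b b]
    · rcases lt_trichotomy a c with hac | hac | hac
      · linarith [h2 a b c, k2 a b c, H a c b hac hbc]
      · subst hac; linarith [h2 a a b, k2 a a b, h1 a a b, k1 a a b]
      · linarith [h2 a b c, k2 a b c, h1 a c b, k1 a c b, H c a b hac hab]
  · subst hab; linarith [h1 a a c, k1 a a c]
  · rcases lt_trichotomy a c with hac | hac | hac
    · linarith [h1 a b c, k1 a b c, H b a c hab hac]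
    · subst hac; linarith [h1 a b a, k1 a b a, h2 b a a, k2 b a a]
    · rcases lt_trichotomy b c with hbc | hbc | hbc
      · linarith [h1 a b c, k1 a b c, h2 b a c, k2 b a c, H b c a hbc hac]
      · subst hbc; linarith [h2 a b b, k2 a b b]
      · linarith [h1 a b c, k1 a b c, h2 b a c, k2 b a c, h1 b c a, k1 b c a, H c b a hbc hab]

set_option maxHeartbeats 20000000 in
lemma F_vals (f : ℝ) (α : Fin 7 → ℝ) (h : Matrix (Fin 7) (Fin 7) ℝ) (hs : ∀ a b, h a b = h b a) :
    F f α h 0 1 2 = f + (h 0 0 + h 1 1 + h 2 2) / 3 ∧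
    F f α h 0 1 3 = α 6 + (h 2 3 - h 1 4 + h 0 5) / 3 ∧
    F f α h 0 1 4 = α 5 + (h 2 4 + h 1 3 - h 0 6) / 3 ∧
    F f α h 0 1 5 = -α 4 + (h 2 5 - h 0 3 - h 1 6) / 3 ∧
    F f α h 0 1 6 = -α 3 + (h 2 6 + h 0 4 + h 1 5) / 3 ∧
    F f α h 0 2 3 = α 5 + (-h 1 3 - h 2 4 - h 0 6) / 3 ∧
    F f α h 0 2 4 = -α 6 + (-h 1 4 + h 2 3 - h 0 5) / 3 ∧
    F f α h 0 2 5 = -α 3 + (-h 1 5 + h 0 4 - h 2 6) / 3 ∧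
    F f α h 0 2 6 = α 4 + (-h 1 6 + h 0 3 + h 2 5) / 3 ∧
    F f α h 0 3 4 = f + (h 0 0 + h 3 3 + h 4 4) / 3 ∧
    F f α h 0 3 5 = α 2 + (h 0 1 + h 4 5 - h 3 6) / 3 ∧
    F f α h 0 3 6 = α 1 + (-h 0 2 + h 4 6 + h 3 5) / 3 ∧
    F f α h 0 4 5 = α 1 + (-h 0 2 - h 3 5 - h 4 6) / 3 ∧
    F f α h 0 4 6 = -α 2 + (-h 0 1 - h 3 6 + h 4 5) / 3 ∧
    F f α h 0 5 6 = f + (h 0 0 + h 5 5 + h 6 6) / 3 ∧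
    F f α h 1 2 3 = -α 4 + (h 0 3 - h 2 5 - h 1 6) / 3 ∧
    F f α h 1 2 4 = α 3 + (h 0 4 - h 1 5 + h 2 6) / 3 ∧
    F f α h 1 2 5 = -α 6 + (h 0 5 + h 2 3 + h 1 4) / 3 ∧
    F f α h 1 2 6 = α 5 + (h 0 6 + h 1 3 - h 2 4) / 3 ∧
    F f α h 1 3 4 = -α 2 + (h 0 1 + h 4 5 + h 3 6) / 3 ∧
    F f α h 1 3 5 = f + (h 1 1 + h 3 3 + h 5 5) / 3 ∧
    F f α h 1 3 6 = -α 0 + (-h 1 2 - h 3 4 + h 5 6) / 3 ∧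
    F f α h 1 4 5 = -α 0 + (-h 1 2 + h 3 4 - h 5 6) / 3 ∧
    F f α h 1 4 6 = -f + (-h 1 1 - h 4 4 - h 6 6) / 3 ∧
    F f α h 1 5 6 = -α 2 + (h 0 1 - h 3 6 - h 4 5) / 3 ∧
    F f α h 2 3 4 = α 1 + (h 0 2 + h 3 5 - h 4 6) / 3 ∧
    F f α h 2 3 5 = -α 0 + (h 1 2 - h 3 4 - h 5 6) / 3 ∧
    F f α h 2 3 6 = -f + (-h 2 2 - h 3 3 - h 6 6) / 3 ∧
    F f α h 2 4 5 = -f + (-h 2 2 - h 4 4 - h 5 5) / 3 ∧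
    F f α h 2 4 6 = α 0 + (-h 1 2 - h 3 4 - h 5 6) / 3 ∧
    F f α h 2 5 6 = α 1 + (h 0 2 - h 3 5 + h 4 6) / 3 ∧
    F f α h 3 4 5 = -α 6 + (h 0 5 - h 1 4 - h 2 3) / 3 ∧
    F f α h 3 4 6 = α 5 + (h 0 6 - h 1 3 + h 2 4) / 3 ∧
    F f α h 3 5 6 = -α 4 + (h 0 3 + h 1 6 + h 2 5) / 3 ∧
    F f α h 4 5 6 = α 3 + (h 0 4 + h 1 5 - h 2 6) / 3 := by
  have hs' : ∀ a b, b < a → h a b = h b a := fun a b _ => hs a b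
  refine ⟨?_, ?_, ?_, ?_, ?_, ?_, ?_, ?_, ?_, ?_, ?_, ?_, ?_, ?_, ?_, ?_, ?_, ?_, ?_, ?_, ?_, ?_, ?_, ?_, ?_, ?_, ?_, ?_, ?_, ?_, ?_, ?_, ?_, ?_, ?_⟩ <;>
  · rw [F, psi_sum _ _ _ _ (by decide) (by decide), iphi_eq, phi_val]
    simp [K, sK]
    try simp (disch := decide) only [hs']
    try ring

noncomputable def solf (χ : Fin 7 → Fin 7 → Fin 7 → ℝ) : ℝ :=
  (χ 0 1 2 + χ 0 3 4 + χ 0 5 6 + χ 1 3 5 - χ 1 4 6 - χ 2 3 6 - χ 2 4 5) / 7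

noncomputable def sola (χ : Fin 7 → Fin 7 → Fin 7 → ℝ) : Fin 7 → ℝ :=
  ![1 / 4 * (-χ 1 3 6 - χ 1 4 5 - χ 2 3 5 + χ 2 4 6),
    1 / 4 * (χ 0 3 6 + χ 0 4 5 + χ 2 3 4 + χ 2 5 6),
    1 / 4 * (χ 0 3 5 - χ 0 4 6 - χ 1 3 4 - χ 1 5 6),
    1 / 4 * (-χ 0 1 6 - χ 0 2 5 + χ 1 2 4 + χ 4 5 6),
    1 / 4 * (-χ 0 1 5 + χ 0 2 6 - χ 1 2 3 - χ 3 5 6),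
    1 / 4 * (χ 0 1 4 + χ 0 2 3 + χ 1 2 6 + χ 3 4 6),
    1 / 4 * (χ 0 1 3 - χ 0 2 4 - χ 1 2 5 - χ 3 4 5)]

noncomputable def solu (χ : Fin 7 → Fin 7 → Fin 7 → ℝ) : Fin 7 → Fin 7 → ℝ :=
  ![![3 / 2 * (χ 0 1 2 + χ 0 3 4 + χ 0 5 6 - 3 * solf χ),
    3 / 4 * (χ 0 3 5 - χ 0 4 6 + χ 1 3 4 + χ 1 5 6),
    3 / 4 * (-χ 0 3 6 - χ 0 4 5 + χ 2 3 4 + χ 2 5 6),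
    3 / 4 * (-χ 0 1 5 + χ 0 2 6 + χ 1 2 3 + χ 3 5 6),
    3 / 4 * (χ 0 1 6 + χ 0 2 5 + χ 1 2 4 + χ 4 5 6),
    3 / 4 * (χ 0 1 3 - χ 0 2 4 + χ 1 2 5 + χ 3 4 5),
    3 / 4 * (-χ 0 1 4 - χ 0 2 3 + χ 1 2 6 + χ 3 4 6)],
    ![0,
    3 / 2 * (χ 0 1 2 + χ 1 3 5 - χ 1 4 6 - 3 * solf χ),
    3 / 4 * (-χ 1 3 6 - χ 1 4 5 + χ 2 3 5 - χ 2 4 6),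
    3 / 4 * (χ 0 1 4 - χ 0 2 3 + χ 1 2 6 - χ 3 4 6),
    3 / 4 * (-χ 0 1 3 - χ 0 2 4 + χ 1 2 5 - χ 3 4 5),
    3 / 4 * (χ 0 1 6 - χ 0 2 5 - χ 1 2 4 + χ 4 5 6),
    3 / 4 * (-χ 0 1 5 - χ 0 2 6 - χ 1 2 3 + χ 3 5 6)],
    ![0,
    0,
    3 / 2 * (χ 0 1 2 - χ 2 3 6 - χ 2 4 5 - 3 * solf χ),
    3 / 4 * (χ 0 1 3 + χ 0 2 4 + χ 1 2 5 - χ 3 4 5),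
    3 / 4 * (χ 0 1 4 - χ 0 2 3 - χ 1 2 6 + χ 3 4 6),
    3 / 4 * (χ 0 1 5 + χ 0 2 6 - χ 1 2 3 + χ 3 5 6),
    3 / 4 * (χ 0 1 6 - χ 0 2 5 + χ 1 2 4 - χ 4 5 6)],
    ![0,
    0,
    0,
    3 / 2 * (χ 0 3 4 + χ 1 3 5 - χ 2 3 6 - 3 * solf χ),
    3 / 4 * (-χ 1 3 6 + χ 1 4 5 - χ 2 3 5 - χ 2 4 6),
    3 / 4 * (χ 0 3 6 - χ 0 4 5 + χ 2 3 4 - χ 2 5 6),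
    3 / 4 * (-χ 0 3 5 - χ 0 4 6 + χ 1 3 4 - χ 1 5 6)],
    ![0,
    0,
    0,
    0,
    3 / 2 * (χ 0 3 4 - χ 1 4 6 - χ 2 4 5 - 3 * solf χ),
    3 / 4 * (χ 0 3 5 + χ 0 4 6 + χ 1 3 4 - χ 1 5 6),
    3 / 4 * (χ 0 3 6 - χ 0 4 5 - χ 2 3 4 + χ 2 5 6)],
    ![0,
    0,
    0,
    0,
    0,
    3 / 2 * (χ 0 5 6 + χ 1 3 5 - χ 2 4 5 - 3 * solf χ),
    3 / 4 * (χ 1 3 6 - χ 1 4 5 - χ 2 3 5 - χ 2 4 6)],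
    ![0,
    0,
    0,
    0,
    0,
    0,
    3 / 2 * (χ 0 5 6 - χ 1 4 6 - χ 2 3 6 - 3 * solf χ)]]

noncomputable def solh (χ : Fin 7 → Fin 7 → Fin 7 → ℝ) : Matrix (Fin 7) (Fin 7) ℝ :=
  Matrix.of fun a b => solu χ (min a b) (max a b)

lemma solh_symm (χ) (a b : Fin 7) : solh χ a b = solh χ b a := by
  simp only [solh, Matrix.of_apply, min_comm a b, max_comm a b]

lemma solh_le (χ) (a b : Fin 7) (hab : a ≤ b) : solh χ a b = solu χ a b := by
  simp only [solh, Matrix.of_apply, min_eq_left hab, max_eq_right hab]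

lemma solh_tr (χ) : ∑ a, solh χ a a = 0 := by
  simp only [solh_le _ _ _ le_rfl, Fin.sum_univ_seven]
  simp [solu, solf]
  ring

lemma sorted_ind (P : Fin 7 → Fin 7 → Fin 7 → Prop)
    (H : P 0 1 2 ∧ P 0 1 3 ∧ P 0 1 4 ∧ P 0 1 5 ∧ P 0 1 6 ∧ P 0 2 3 ∧ P 0 2 4 ∧ P 0 2 5 ∧ P 0 2 6 ∧ P 0 3 4 ∧ P 0 3 5 ∧ P 0 3 6 ∧ P 0 4 5 ∧ P 0 4 6 ∧ P 0 5 6 ∧ P 1 2 3 ∧ P 1 2 4 ∧ P 1 2 5 ∧ P 1 2 6 ∧ P 1 3 4 ∧ P 1 3 5 ∧ P 1 3 6 ∧ P 1 4 5 ∧ P 1 4 6 ∧ P 1 5 6 ∧ P 2 3 4 ∧ P 2 3 5 ∧ P 2 3 6 ∧ P 2 4 5 ∧ P 2 4 6 ∧ P 2 5 6 ∧ P 3 4 5 ∧ P 3 4 6 ∧ P 3 5 6 ∧ P 4 5 6) :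
    ∀ a b c, a < b → b < c → P a b c := by
  obtain ⟨h0, h1, h2, h3, h4, h5, h6, h7, h8, h9, h10, h11, h12, h13, h14, h15, h16, h17, h18, h19, h20, h21, h22, h23, h24, h25, h26, h27, h28, h29, h30, h31, h32, h33, h34⟩ := H
  intro a b c hab hbc
  fin_cases a <;> fin_cases b <;> first
    | exact absurd hab (by decide)
    | (fin_cases c <;> first
        | exact absurd hbc (by decide)
        | assumption)

set_option maxHeartbeats 4000000 in
lemma sol_spec (χ : Fin 7 → Fin 7 → Fin 7 → ℝ)
    (h1 : ∀ a b c, χ b a c = -χ a b c) (h2 : ∀ a b c, χ a c b = -χ a b c) (a b c : Fin 7) :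
    χ a b c = F (solf χ) (sola χ) (solh χ) a b c := by
  refine alt_ext _ _ h1 h2 (F_swap1 _ _ _) (F_swap2 _ _ _) ?_ a b c
  obtain ⟨h0, h1, h2, h3, h4, h5, h6, h7, h8, h9, h10, h11, h12, h13, h14, h15, h16, h17, h18, h19, h20, h21, h22, h23, h24, h25, h26, h27, h28, h29, h30, h31, h32, h33, h34⟩ := F_vals (solf χ) (sola χ) (solh χ) (solh_symm χ)
  apply sorted_ind
  refine ⟨h0.symm ▸ ?_, h1.symm ▸ ?_, h2.symm ▸ ?_, h3.symm ▸ ?_, h4.symm ▸ ?_, h5.symm ▸ ?_, h6.symm ▸ ?_, h7.symm ▸ ?_, h8.symm ▸ ?_, h9.symm ▸ ?_, h10.symm ▸ ?_, h11.symm ▸ ?_, h12.symm ▸ ?_, h13.symm ▸ ?_, h14.symm ▸ ?_, h15.symm ▸ ?_, h16.symm ▸ ?_, h17.symm ▸ ?_, h18.symm ▸ ?_, h19.symm ▸ ?_, h20.symm ▸ ?_, h21.symm ▸ ?_, h22.symm ▸ ?_, h23.symm ▸ ?_, h24.symm ▸ ?_, h25.symm ▸ ?_, h26.symm ▸ ?_,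 h27.symm ▸ ?_, h28.symm ▸ ?_, h29.symm ▸ ?_, h30.symm ▸ ?_, h31.symm ▸ ?_, h32.symm ▸ ?_, h33.symm ▸ ?_, h34.symm ▸ ?_⟩ <;>
  · simp (disch := decide) only [solh_le]
    simp [solu, sola, solf]
    ring

set_option maxHeartbeats 4000000 in
lemma F_inj (f : ℝ) (α : Fin 7 → ℝ) (h : Matrix (Fin 7) (Fin 7) ℝ) (hs : ∀ a b, h a b = h b a)
    (ht : ∑ a, h a a = 0) (hF : ∀ a b c, F f α h a b c = 0) : f = 0 ∧ α = 0 ∧ h = 0 := by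
  have hv := F_vals f α h hs
  simp only [hF] at hv
  obtain ⟨h0, h1, h2, h3, h4, h5, h6, h7, h8, h9, h10, h11, h12, h13, h14, h15, h16, h17, h18, h19, h20, h21, h22, h23, h24, h25, h26, h27, h28, h29, h30, h31, h32, h33, h34⟩ := hv
  rw [Fin.sum_univ_seven] at ht
  have hf : f = 0 := by clear h1 h2 h3 h4 h5 h6 h7 h8 h10 h11 h12 h13 h15 h16 h17 h18 h19 h21 h22 h24 h25 h26 h29 h30 h31 h32 h33 h34; linarith
  refine ⟨hf, ?_, ?_⟩
  · funext i
    fin_cases i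
    · show α 0 = 0
      linarith only [h21, h22, h26, h29]
    · show α 1 = 0
      linarith only [h11, h12, h25, h30]
    · show α 2 = 0
      linarith only [h10, h13, h19, h24]
    · show α 3 = 0
      linarith only [h4, h7, h16, h34]
    · show α 4 = 0
      linarith only [h3, h8, h15, h33]
    · show α 5 = 0
      linarith only [h2, h5, h18, h32]
    · show α 6 = 0
      linarith only [h1, h6, h17, h31]
  · have hle : ∀ a b : Fin 7, a ≤ b → h a b = 0 := by
      intro a b hab
      fin_cases a <;> fin_cases b <;> first
        | exact absurd hab (by decide)
        | skip
      · show h 0 0 = 0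
        linarith only [h0, h9, h14, hf, ht]
      · show h 0 1 = 0
        linarith only [h10, h13, h19, h24]
      · show h 0 2 = 0
        linarith only [h11, h12, h25, h30]
      · show h 0 3 = 0
        linarith only [h3, h8, h15, h33]
      · show h 0 4 = 0
        linarith only [h4, h7, h16, h34]
      · show h 0 5 = 0
        linarith only [h1, h6, h17, h31]
      · show h 0 6 = 0
        linarith only [h2, h5, h18, h32]
      · show h 1 1 = 0
        linarith only [h0, h20, h23, hf, ht]
      · show h 1 2 = 0
        linarith only [h21, h22, h26, h29]
      · show h 1 3 = 0
        linarith only [h2, h5, h18, h32]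
      · show h 1 4 = 0
        linarith only [h1, h6, h17, h31]
      · show h 1 5 = 0
        linarith only [h4, h7, h16, h34]
      · show h 1 6 = 0
        linarith only [h3, h8, h15, h33]
      · show h 2 2 = 0
        linarith only [h0, h27, h28, hf, ht]
      · show h 2 3 = 0
        linarith only [h1, h6, h17, h31]
      · show h 2 4 = 0
        linarith only [h2, h5, h18, h32]
      · show h 2 5 = 0
        linarith only [h3, h8, h15, h33]
      · show h 2 6 = 0
        linarith only [h4, h7, h16, h34]
      · show h 3 3 = 0
        linarith only [h9, h20, h27, hf, ht]
      · show h 3 4 = 0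
        linarith only [h21, h22, h26, h29]
      · show h 3 5 = 0
        linarith only [h11, h12, h25, h30]
      · show h 3 6 = 0
        linarith only [h10, h13, h19, h24]
      · show h 4 4 = 0
        linarith only [h9, h23, h28, hf, ht]
      · show h 4 5 = 0
        linarith only [h10, h13, h19, h24]
      · show h 4 6 = 0
        linarith only [h11, h12, h25, h30]
      · show h 5 5 = 0
        linarith only [h14, h20, h28, hf, ht]
      · show h 5 6 = 0
        linarith only [h21, h22, h26, h29]
      · show h 6 6 = 0
        linarith only [h14, h23, h27, hf, ht]
    ext a b
    rcases le_total a b with hab | hab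
    · exact hle a b hab
    · rw [hs]; exact hle b a hab

def Lfun (x : Fin 27 → ℝ) : Matrix (Fin 7) (Fin 7) ℝ :=
  !![x 0, x 1, x 2, x 3, x 4, x 5, x 6;
    x 1, x 7, x 8, x 9, x 10, x 11, x 12;
    x 2, x 8, x 13, x 14, x 15, x 16, x 17;
    x 3, x 9, x 14, x 18, x 19, x 20, x 21;
    x 4, x 10, x 15, x 19, x 22, x 23, x 24;
    x 5, x 11, x 16, x 20, x 23, x 25, x 26;
    x 6, x 12, x 17, x 21, x 24, x 26, -(x 0 + x 7 + x 13 + x 18 + x 22 + x 25)]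

def Linv (h : Matrix (Fin 7) (Fin 7) ℝ) : Fin 27 → ℝ :=
  ![h 0 0, h 0 1, h 0 2, h 0 3, h 0 4, h 0 5, h 0 6, h 1 1, h 1 2, h 1 3, h 1 4, h 1 5, h 1 6, h 2 2, h 2 3, h 2 4, h 2 5, h 2 6, h 3 3, h 3 4, h 3 5, h 3 6, h 4 4, h 4 5, h 4 6, h 5 5, h 5 6]

lemma Linv_Lfun (x : Fin 27 → ℝ) : Linv (Lfun x) = x := by
  funext i
  fin_cases i <;> rfl

lemma Lfun_symm (x : Fin 27 → ℝ) (a b : Fin 7) : Lfun x a b = Lfun x b a := by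
  fin_cases a <;> fin_cases b <;> rfl

lemma Lfun_tr (x : Fin 27 → ℝ) : ∑ a, Lfun x a a = 0 := by
  rw [Fin.sum_univ_seven]
  simp [Lfun]

lemma Lfun_Linv (h : Matrix (Fin 7) (Fin 7) ℝ) (hs : ∀ a b, h a b = h b a)
    (ht : ∑ a, h a a = 0) : Lfun (Linv h) = h := by
  rw [Fin.sum_univ_seven] at ht
  ext a b
  fin_cases a <;> fin_cases b <;> first
    | rfl
    | exact hs _ _
    | skip
  show -(h 0 0 + h 1 1 + h 2 2 + h 3 3 + h 4 4 + h 5 5) = h 6 6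
  linarith

lemma Lfun_add (x y : Fin 27 → ℝ) : Lfun (x + y) = Lfun x + Lfun y := by
  ext a b
  fin_cases a <;> fin_cases b <;> first
    | rfl
    | (simp [Lfun]; ring)

lemma Lfun_smul (r : ℝ) (x : Fin 27 → ℝ) : Lfun (r • x) = r • Lfun x := by
  ext a b
  fin_cases a <;> fin_cases b <;> first
    | rfl
    | (simp [Lfun]; ring)

lemma iphi_add (h k : Matrix (Fin 7) (Fin 7) ℝ) : iphi (h + k) = iphi h + iphi k := by
  funext a b c
  simp only [Pi.add_apply, iphi_eq, Matrix.add_apply]; ring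

lemma iphi_smul (r : ℝ) (h : Matrix (Fin 7) (Fin 7) ℝ) : iphi (r • h) = r • iphi h := by
  funext a b c
  simp only [Pi.smul_apply, iphi_eq, Matrix.smul_apply, smul_eq_mul]; ring

noncomputable def M27 : (Fin 27 → ℝ) →ₗ[ℝ] (Fin 7 → Fin 7 → Fin 7 → ℝ) where
  toFun x := iphi (Lfun x)
  map_add' x y := by rw [Lfun_add, iphi_add]
  map_smul' r x := by rw [Lfun_smul, iphi_smul]; rfl

noncomputable def M7 : (Fin 7 → ℝ) →ₗ[ℝ] (Fin 7 → Fin 7 → Fin 7 → ℝ) where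
  toFun α a b c := ∑ d, α d * psi d a b c
  map_add' x y := by
    funext a b c
    simp only [Pi.add_apply, add_mul, Finset.sum_add_distrib]
  map_smul' r x := by
    funext a b c
    simp [Finset.mul_sum, mul_assoc]

lemma F_split (f α h) (a b c : Fin 7) :
    F f α h a b c = f * phi a b c + M7 α a b c + iphi h a b c := rfl

lemma iphi_zero (a b c : Fin 7) : iphi 0 a b c = 0 := by simp [iphi]

lemma rank1 : Module.finrank ℝ Lam3_1 = 1 := by
  have : Lam3_1 = Submodule.span ℝ {phi} := by
    ext χ
    rw [Submodule.mem_span_singleton]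
    constructor
    · rintro ⟨f, hf⟩
      exact ⟨f, by funext a b c; simp [hf]⟩
    · rintro ⟨f, rfl⟩
      exact ⟨f, fun a b c => rfl⟩
  rw [this]
  apply finrank_span_singleton
  intro h
  have := congrFun (congrFun (congrFun h 0) 1) 2
  simp [phi, phi0] at this

lemma rank7 : Module.finrank ℝ Lam3_7 = 7 := by
  have : Lam3_7 = LinearMap.range M7 := by
    ext χ
    rw [LinearMap.mem_range]
    constructor
    · rintro ⟨α, hα⟩
      exact ⟨α, by funext a b c; exact (hα a b c).symm⟩
    · rintro ⟨α, rfl⟩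
      exact ⟨α, fun a b c => rfl⟩
  rw [this, LinearMap.finrank_range_of_inj]
  · simp
  · rw [← LinearMap.ker_eq_bot, LinearMap.ker_eq_bot']
    intro α hα
    refine (F_inj 0 α 0 (by simp) (by simp) fun a b c => ?_).2.1
    rw [F_split, hα, iphi_zero]; simp

lemma rank27 : Module.finrank ℝ Lam3_27 = 27 := by
  have : Lam3_27 = LinearMap.range M27 := by
    ext χ
    rw [LinearMap.mem_range]
    constructor
    · rintro ⟨h, hs, ht, hχ⟩
      refine ⟨Linv h, ?_⟩
      funext a b c
      show iphi (Lfun (Linv h)) a b c = _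
      rw [Lfun_Linv h hs ht, hχ]
    · rintro ⟨x, rfl⟩
      exact ⟨Lfun x, Lfun_symm x, Lfun_tr x, fun a b c => rfl⟩
  rw [this, LinearMap.finrank_range_of_inj]
  · simp
  · rw [← LinearMap.ker_eq_bot, LinearMap.ker_eq_bot']
    intro x hx
    have hx' : iphi (Lfun x) = 0 := hx
    have := (F_inj 0 0 (Lfun x) (Lfun_symm x) (Lfun_tr x) fun a b c => by
      rw [F_split, hx']; simp).2.2
    rw [← Linv_Lfun x, this]
    funext i
    fin_cases i <;> rfl

lemma F_sub (f g : ℝ) (α β : Fin 7 → ℝ) (h k : Matrix (Fin 7) (Fin 7) ℝ) (a b c : Fin 7) :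
    F (f - g) (α - β) (h - k) a b c = F f α h a b c - F g β k a b c := by
  simp only [F_split, iphi_eq, map_sub, Matrix.sub_apply, Pi.sub_apply]; ring

lemma F_unique (f g : ℝ) (α β : Fin 7 → ℝ) (h k : Matrix (Fin 7) (Fin 7) ℝ)
    (hs : ∀ a b, h a b = h b a) (ht : ∑ a, h a a = 0)
    (ks : ∀ a b, k a b = k b a) (kt : ∑ a, k a a = 0)
    (hF : ∀ a b c, F f α h a b c = F g β k a b c) : f = g ∧ α = β ∧ h = k := by
  obtain ⟨h1, h2, h3⟩ := F_inj (f - g) (α - β) (h - k)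
    (fun a b => by rw [Matrix.sub_apply, Matrix.sub_apply, hs a b, ks a b])
    (by simp [Finset.sum_sub_distrib, ht, kt])
    (fun a b c => by rw [F_sub, hF, sub_self])
  exact ⟨sub_eq_zero.1 h1, sub_eq_zero.1 h2, sub_eq_zero.1 h3⟩

end G2aux

/-- Every alternating 3-tensor `χ` on `ℝ⁷` decomposes uniquely as
`χ = f φ + α ⌟ ψ + i_φ(h)` with `f ∈ ℝ`, `α ∈ ℝ⁷` and `h` traceless symmetric;
consequently `Λ³ = Λ³₁ ⊕ Λ³₇ ⊕ Λ³₂₇`, of dimensions `1`, `7`, `27`. -/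
theorem lam3_decomposition :
    (∀ χ : Fin 7 → Fin 7 → Fin 7 → ℝ,
      (∀ a b c, χ b a c = -χ a b c) → (∀ a b c, χ a c b = -χ a b c) →
      ∃! t : ℝ × (Fin 7 → ℝ) × Matrix (Fin 7) (Fin 7) ℝ,
        (∀ a b, t.2.2 a b = t.2.2 b a) ∧ (∑ a : Fin 7, t.2.2 a a = 0) ∧
        (∀ a b c, χ a b c = t.1 * phi a b c + (∑ d : Fin 7, t.2.1 d * psi d a b c)
          + iphi t.2.2 a b c)) ∧
    Lam3_1 ⊔ Lam3_7 ⊔ Lam3_27 = Lam3 ∧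
    Lam3_1 ⊓ Lam3_7 = ⊥ ∧ Lam3_1 ⊓ Lam3_27 = ⊥ ∧ Lam3_7 ⊓ Lam3_27 = ⊥ ∧
    Module.finrank ℝ Lam3_1 = 1 ∧ Module.finrank ℝ Lam3_7 = 7 ∧
    Module.finrank ℝ Lam3_27 = 27 := by
  refine ⟨?_, ?_, ?_, ?_, ?_, G2aux.rank1, G2aux.rank7, G2aux.rank27⟩
  · intro χ h1 h2
    refine ⟨(G2aux.solf χ, G2aux.sola χ, G2aux.solh χ),
      ⟨G2aux.solh_symm χ, G2aux.solh_tr χ, G2aux.sol_spec χ h1 h2⟩, ?_⟩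
    rintro ⟨f, α, h⟩ ⟨hs, ht, hχ⟩
    obtain ⟨e1, e2, e3⟩ := G2aux.F_unique f (G2aux.solf χ) α (G2aux.sola χ) h (G2aux.solh χ)
      hs ht (G2aux.solh_symm χ) (G2aux.solh_tr χ)
      (fun a b c => (hχ a b c).symm.trans (G2aux.sol_spec χ h1 h2 a b c))
    rw [e1, e2, e3]
  · apply le_antisymm
    · refine sup_le (sup_le ?_ ?_) ?_
      · rintro χ ⟨f, hf⟩
        exact ⟨fun a b c => by rw [hf, hf, G2aux.phi_swap1 a b c]; ring,
          fun a b c => by rw [hf, hf, G2aux.phi_swap2 a b c]; ring⟩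
      · rintro χ ⟨α, hα⟩
        refine ⟨fun a b c => ?_, fun a b c => ?_⟩
        · rw [hα, hα, ← Finset.sum_neg_distrib]
          exact Finset.sum_congr rfl fun d _ => by rw [G2aux.psi_swap1 d a b c]; ring
        · rw [hα, hα, ← Finset.sum_neg_distrib]
          exact Finset.sum_congr rfl fun d _ => by rw [G2aux.psi_swap2 d a b c]; ring
      · rintro χ ⟨h, -, -, hχ⟩
        exact ⟨fun a b c => by rw [hχ, hχ, G2aux.iphi_swap1],
          fun a b c => by rw [hχ, hχ, G2aux.iphi_swap2]⟩
    · rintro χ ⟨h1, h2⟩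
      have e : χ = (G2aux.solf χ • phi + G2aux.M7 (G2aux.sola χ)) + iphi (G2aux.solh χ) := by
        funext a b c
        exact G2aux.sol_spec χ h1 h2 a b c
      rw [e]
      exact Submodule.add_mem_sup (Submodule.add_mem_sup ⟨_, fun a b c => rfl⟩
        ⟨_, fun a b c => rfl⟩) ⟨_, G2aux.solh_symm χ, G2aux.solh_tr χ, fun a b c => rfl⟩
  · rw [eq_bot_iff]
    rintro χ ⟨⟨f, hf⟩, ⟨α, hα⟩⟩
    obtain ⟨rfl, -, -⟩ := G2aux.F_unique f 0 0 α 0 0 (by simp) (by simp) (by simp) (by simp)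
      (fun a b c => by simpa [G2aux.F, G2aux.iphi_zero] using (hf a b c).symm.trans (hα a b c))
    rw [Submodule.mem_bot]
    funext a b c
    simp [hf]
  · rw [eq_bot_iff]
    rintro χ ⟨⟨f, hf⟩, ⟨h, hs, ht, hχ⟩⟩
    obtain ⟨rfl, -, -⟩ := G2aux.F_unique f 0 0 0 0 h (by simp) (by simp) hs ht
      (fun a b c => by simpa [G2aux.F, G2aux.iphi_zero] using (hf a b c).symm.trans (hχ a b c))
    rw [Submodule.mem_bot]
    funext a b c
    simp [hf]
  · rw [eq_bot_iff]
    rintro χ ⟨⟨α, hα⟩, ⟨h, hs, ht, hχ⟩⟩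
    obtain ⟨-, rfl, -⟩ := G2aux.F_unique 0 0 α 0 0 h (by simp) (by simp) hs ht
      (fun a b c => by simpa [G2aux.F, G2aux.iphi_zero] using (hα a b c).symm.trans (hχ a b c))
    rw [Submodule.mem_bot]
    funext a b c
    simp [hα]
end
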